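/- arXiv:0802.1977 — 2 statements merged into one kernel-verified Lean document; each statement's English description precedes it below -/
import Mathlib

section
/- Let p be a prime, R a commutative ring, and A a commutative R-algebra of characteristic p. Let D be an R-derivation of A and a ∈ A. Writing L_x for multiplication by x and setting T = L_a + D and b = T^p(1), one has the operator identity T^p = L_b + D^p, where T^p and D^p are p-fold composites in the endomorphism ring End_R(A). -/
/-!
If `U (f x y) = f (S x) y + f x (T y)` for a bilinear map `f`, then `f` intertwines the sum of the
commuting operators `S ⊗ 1` and `1 ⊗ T` with `U`. Where `p = 0`, the `p`-th power of such a sum is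
the sum of the `p`-th powers, so `U ^ p`, `S ^ p`, `T ^ p` satisfy the same identity, and likewise
for `p ^ n`. The multiplication of `A` relates `U = S = L_a + D` and `T = D` in this way; evaluate
at `x = 1`.
-/

open scoped TensorProduct

section BilinearLeibniz

variable {R M N P : Type*} [CommSemiring R] [AddCommMonoid M] [AddCommMonoid N] [AddCommMonoid P]
  [Module R M] [Module R N] [Module R P]

theorem commute_rTensor_lTensor (S : Module.End R M) (T : Module.End R N) :
    Commute (S.rTensor N) (T.lTensor M) :=
  (LinearMap.rTensor_comp_lTensor ..).trans (LinearMap.lTensor_comp_rTensor ..).symm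

theorem exists_rTensor_add_lTensor_pow_prime_pow_eq {p : ℕ} (hp : p.Prime) (n : ℕ)
    (S : Module.End R M) (T : Module.End R N) :
    ∃ E : Module.End R (M ⊗[R] N),
      (S.rTensor N + T.lTensor M) ^ p ^ n =
        (S ^ p ^ n).rTensor N + (T ^ p ^ n).lTensor M + p • E := by
  obtain ⟨E, hE⟩ := (commute_rTensor_lTensor S T).exists_add_pow_prime_pow_eq hp n
  refine ⟨S.rTensor N * T.lTensor M * E, ?_⟩
  rw [hE, LinearMap.rTensor_pow, LinearMap.lTensor_pow, nsmul_eq_mul]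
  simp only [mul_assoc]

theorem comp_lift_eq_lift_comp_rTensor_add_lTensor (f : M →ₗ[R] N →ₗ[R] P) {S : Module.End R M}
    {T : Module.End R N} {U : Module.End R P}
    (h : ∀ x y, U (f x y) = f (S x) y + f x (T y)) :
    U ∘ₗ TensorProduct.lift f = TensorProduct.lift f ∘ₗ (S.rTensor N + T.lTensor M) := by
  ext x y
  simp [h]

theorem pow_prime_pow_apply_bilinear {p : ℕ} (hp : p.Prime) (hP : ∀ z : P, p • z = 0)
    (n : ℕ) (f : M →ₗ[R] N →ₗ[R] P) {S : Module.End R M} {T : Module.End R N}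
    {U : Module.End R P} (h : ∀ x y, U (f x y) = f (S x) y + f x (T y)) (x : M) (y : N) :
    (U ^ p ^ n) (f x y) = f ((S ^ p ^ n) x) y + f x ((T ^ p ^ n) y) := by
  have intertwine : (U ^ p ^ n) ∘ₗ TensorProduct.lift f =
      TensorProduct.lift f ∘ₗ ((S.rTensor N + T.lTensor M) ^ p ^ n) :=
    Module.End.commute_pow_left_of_commute (comp_lift_eq_lift_comp_rTensor_add_lTensor f h) (p ^ n)
  obtain ⟨E, hE⟩ := exists_rTensor_add_lTensor_pow_prime_pow_eq hp n S T
  calc (U ^ p ^ n) (f x y)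
      = TensorProduct.lift f (((S.rTensor N + T.lTensor M) ^ p ^ n) (x ⊗ₜ y)) :=
        LinearMap.congr_fun intertwine (x ⊗ₜ y)
    _ = f ((S ^ p ^ n) x) y + f x ((T ^ p ^ n) y) + p • TensorProduct.lift f (E (x ⊗ₜ y)) := by
        simp [hE]
    _ = f ((S ^ p ^ n) x) y + f x ((T ^ p ^ n) y) := by rw [hP, add_zero]

end BilinearLeibniz

section Algebra

variable {R A : Type*} [CommSemiring R] [Semiring A] [Algebra R A]

theorem mulLeft_add_apply_mul {D : A →ₗ[R] A} (hD : ∀ x y, D (x * y) = x * D y + D x * y)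
    (a x y : A) :
    (LinearMap.mulLeft R a + D) (x * y) = (LinearMap.mulLeft R a + D) x * y + x * D y := by
  simp only [LinearMap.add_apply, LinearMap.mulLeft_apply, hD, add_mul, mul_assoc]
  abel

theorem statement3_general (p : ℕ) (hp : p.Prime) [CharP A p] (n : ℕ)
    (D : A →ₗ[R] A) (hD : ∀ x y, D (x * y) = x * D y + D x * y) (a : A) :
    (LinearMap.mulLeft R a + D) ^ p ^ n =
      LinearMap.mulLeft R (((LinearMap.mulLeft R a + D) ^ p ^ n) 1) + D ^ p ^ n := by
  have char_smul (z : A) : p • z = 0 := by rw [nsmul_eq_mul, CharP.cast_eq_zero, zero_mul]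
  ext y
  simpa only [LinearMap.mul_apply', one_mul, LinearMap.add_apply, LinearMap.mulLeft_apply] using
    pow_prime_pow_apply_bilinear hp char_smul n (LinearMap.mul R A)
      (mulLeft_add_apply_mul hD a) 1 y

end Algebra

/-- Let `p` be a prime, `R` a commutative ring and `A` a
commutative `R`-algebra of characteristic `p`.  Let `D` be an `R`-derivation of
`A` and `a ∈ A`.  With `L_x` multiplication by `x`, `T = L_a + D` and
`b = T ^ p 1`, one has the operator identity `T ^ p = L_b + D ^ p` in
`End_R(A)`. -/
theorem statement3 {R A : Type*} [CommRing R] [CommRing A] [Algebra R A]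
    (p : ℕ) (hp : p.Prime) [CharP A p]
    (D : Derivation R A A) (a : A) :
    (LinearMap.mulLeft R a + (D : A →ₗ[R] A)) ^ p =
      LinearMap.mulLeft R (((LinearMap.mulLeft R a + (D : A →ₗ[R] A)) ^ p) 1) +
        (D : A →ₗ[R] A) ^ p := by
  simpa only [pow_one] using
    statement3_general p hp 1 (D : A →ₗ[R] A) (fun x y => by simp [mul_comm]) a
end

section
/- Let p be a prime, R a commutative ring, A a commutative R-algebra of characteristic p, and M an A-module with a connection ∇ (a map from R-derivations of A to R-linear endomorphisms of M that is additive in D, A-linear in D, and satisfies the Leibniz rule). Assume ∇ is integrable: ∇_D ∘ ∇_E − ∇_E ∘ ∇_D = ∇_{⁅D,E⁆} for all R-derivations D, E of A, where ⁅D,E⁆ = D∘E − E∘D is the commutator derivation. Then the p-curvature ψ(D) := (∇_D)^p − ∇_{D^{[p]}} is additive in D: ψ(D+E) = ψ(D) + ψ(E) for all R-derivations D, E of A. -/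
/-!
Jacobson's formula: in a ring `S` with `p = 0`, the element `(x + y) ^ p - x ^ p - y ^ p` is a sum
of iterated commutators of `x` and `y`. Put `f = x * X + y` in `S[X]`. Since `ad f` is the
difference of two commuting multiplications, `(f ^ p)' = (ad f) ^ (p - 1) (f')`, so the coefficients
of `(f ^ p)'`, and hence those of `f ^ p` in degrees prime to `p`, are sums of iterated commutators.
The coefficients in degrees `0` and `p` are `y ^ p` and `x ^ p`, and evaluation at `X = 1` gives the
formula.

Applied to the image of `D ↦ (D, ∇ D)` in `End A × End M`, the formula produces a single derivation
`F` with `F = (D + E) ^ p - D ^ p - E ^ p` and `∇ F = (∇ (D + E)) ^ p - (∇ D) ^ p - (∇ E) ^ p`. A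
derivation is determined by its underlying endomorphism, so `F = (D + E)^[p] - D^[p] - E^[p]`, and
applying `∇` gives the claim.
-/

section PrimeCharacteristic

theorem natCast_end_eq_zero {k A M : Type*} [Semiring k] [Semiring A] [AddCommMonoid M]
    [Module k M] [Module A M] {n : ℕ} (h0 : (n : A) = 0) : (n : Module.End k M) = 0 := by
  ext m
  rw [Module.End.natCast_apply, ← Nat.cast_smul_eq_nsmul A, h0, zero_smul, LinearMap.zero_apply]

variable {S : Type*} [Ring S] {p : ℕ}

theorem natCast_choose_pred_prime (hp : p.Prime) (h0 : (p : S) = 0) {j : ℕ} (hj : j < p) :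
    ((p - 1).choose j : S) = (-1) ^ j := by
  induction j with
  | zero => simp
  | succ k ih =>
    have pascal : p.choose (k + 1) = (p - 1).choose k + (p - 1).choose (k + 1) := by
      rw [← Nat.choose_succ_succ', Nat.sub_add_cancel hp.one_le]
    obtain ⟨c, hc⟩ := hp.dvd_choose_self k.succ_ne_zero hj
    have vanish : (p.choose (k + 1) : S) = 0 := by rw [hc, Nat.cast_mul, h0, zero_mul]
    rw [pascal, Nat.cast_add, ih (by lia)] at vanish
    rw [pow_succ, mul_neg_one, eq_neg_of_add_eq_zero_right vanish]

theorem sub_pow_pred_prime_of_commute (hp : p.Prime) (h0 : (p : S) = 0) {u v : S}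
    (h : Commute u v) :
    (u - v) ^ (p - 1) = ∑ j ∈ Finset.range p, u ^ (p - 1 - j) * v ^ j := by
  rw [sub_eq_neg_add, h.symm.neg_left.add_pow, Nat.sub_add_cancel hp.one_le]
  refine Finset.sum_congr rfl fun j hj ↦ ?_
  have sign_comm : Commute ((-1 : S) ^ j) (v ^ j * u ^ (p - 1 - j)) :=
    (Commute.neg_one_left _).pow_left j
  calc (-v) ^ j * u ^ (p - 1 - j) * ((p - 1).choose j : S)
      = (-1) ^ j * (v ^ j * u ^ (p - 1 - j)) * (-1) ^ j := by
        rw [natCast_choose_pred_prime hp h0 (Finset.mem_range.mp hj), neg_pow v j,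
          mul_assoc ((-1) ^ j)]
    _ = v ^ j * u ^ (p - 1 - j) := by
        rw [sign_comm.eq, mul_assoc, ← pow_add, Even.neg_one_pow ⟨j, rfl⟩, mul_one]
    _ = u ^ (p - 1 - j) * v ^ j := (h.pow_pow _ _).eq.symm

theorem iterate_lie_pred_prime (hp : p.Prime) (h0 : (p : S) = 0) (a x : S) :
    (⁅a, ·⁆)^[p - 1] x = ∑ j ∈ Finset.range p, a ^ (p - 1 - j) * x * a ^ j := by
  have ad_eq : (⁅a, ·⁆) = ⇑(LinearMap.mulLeft ℤ a - LinearMap.mulRight ℤ a) := by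
    ext z
    simp [Ring.lie_def]
  rw [ad_eq, ← Module.End.pow_apply,
    sub_pow_pred_prime_of_commute hp (natCast_end_eq_zero h0) (LinearMap.commute_mulLeft_right a a)]
  simp [LinearMap.sum_apply, LinearMap.pow_mulLeft, LinearMap.pow_mulRight, mul_assoc]

end PrimeCharacteristic

section Jacobson

open Polynomial

section Semiring

variable {S : Type*} [Semiring S]

theorem derivative_pow_eq_sum (f : S[X]) (n : ℕ) :
    derivative (f ^ n) = ∑ j ∈ Finset.range n, f ^ (n - 1 - j) * derivative f * f ^ j := by
  induction n with
  | zero => simp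
  | succ n ih =>
    rw [pow_succ, derivative_mul, ih, Finset.sum_range_succ', Finset.sum_mul]
    simp [pow_succ, mul_assoc, Nat.sub_sub, add_comm]

theorem add_pow_eq_sum_coeff (x y : S) (n : ℕ) :
    (x + y) ^ n = ∑ i ∈ Finset.range (n + 1), ((C x * X + C y) ^ n).coeff i := by
  have degree_lt : ((C x * X + C y) ^ n).natDegree < n + 1 := by
    have := natDegree_pow_le_of_le n (natDegree_linear_le (a := x) (b := y))
    lia
  have eval_one : ((C x * X + C y) ^ n).eval 1 = (x + y) ^ n := by
    have := map_pow (eval₂RingHom' (RingHom.id S) 1 fun _ ↦ Commute.one_right _) (C x * X + C y) n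
    simpa [eval₂RingHom'] using this
  simpa [eval_one] using eval_eq_sum_range' degree_lt 1

end Semiring

variable {S : Type*} [Ring S] {p : ℕ}

theorem derivative_pow_prime_eq_iterate_lie (hp : p.Prime) (h0 : (p : S) = 0) (f : S[X]) :
    derivative (f ^ p) = (⁅f, ·⁆)^[p - 1] (derivative f) := by
  have h0_poly : (p : S[X]) = 0 := by rw [← C_eq_natCast, h0, C_0]
  rw [derivative_pow_eq_sum, iterate_lie_pred_prime hp h0_poly]

theorem coeff_lie (f g : S[X]) (n : ℕ) :
    ⁅f, g⁆.coeff n =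
      ∑ ij ∈ Finset.HasAntidiagonal.antidiagonal n, ⁅f.coeff ij.1, g.coeff ij.2⁆ := by
  simp only [Ring.lie_def, coeff_sub, coeff_mul, Finset.sum_sub_distrib]
  rw [← Finset.Nat.sum_antidiagonal_swap (f := fun ij ↦ g.coeff ij.1 * f.coeff ij.2)]
  rfl

variable {G : AddSubgroup S}

theorem coeff_iterate_lie_mem (hG : ∀ a ∈ G, ∀ b ∈ G, ⁅a, b⁆ ∈ G) {f g : S[X]}
    (hf : ∀ i, f.coeff i ∈ G) (hg : ∀ i, g.coeff i ∈ G) (n i : ℕ) :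
    ((⁅f, ·⁆)^[n] g).coeff i ∈ G := by
  induction n generalizing i with
  | zero => exact hg i
  | succ n ih =>
    rw [Function.iterate_succ_apply', coeff_lie]
    exact G.sum_mem fun ij _ ↦ hG _ (hf ij.1) _ (ih ij.2)

theorem mem_of_natCast_mul_mem (h0 : (p : S) = 0) {n : ℕ} (hn : n.Coprime p) {a : S}
    (ha : n * a ∈ G) : a ∈ G := by
  obtain ⟨u, v, bezout⟩ := Nat.isCoprime_iff_coprime.mpr hn
  have inverse : (u : S) * n = 1 := by
    simpa [h0] using congrArg (Int.cast : ℤ → S) bezout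
  simpa [← mul_assoc, inverse] using G.zsmul_mem ha u

theorem coeff_pow_prime_mem_of_not_dvd (hp : p.Prime) (h0 : (p : S) = 0)
    (hG : ∀ a ∈ G, ∀ b ∈ G, ⁅a, b⁆ ∈ G) {f : S[X]} (hf : ∀ i, f.coeff i ∈ G)
    {i : ℕ} (hi : ¬ p ∣ i) : (f ^ p).coeff i ∈ G := by
  obtain ⟨k, rfl⟩ : ∃ k, i = k + 1 :=
    Nat.exists_eq_succ_of_ne_zero fun h ↦ hi (h ▸ dvd_zero p)
  have natCast_mul_coeff (g : S[X]) (m : ℕ) :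
      ((m + 1 : ℕ) : S) * g.coeff (m + 1) = (derivative g).coeff m := by
    rw [coeff_derivative, (Nat.cast_commute _ _).eq, Nat.cast_succ]
  have derivative_mem (m : ℕ) : (derivative f).coeff m ∈ G := by
    rw [← natCast_mul_coeff, ← nsmul_eq_mul]
    exact G.nsmul_mem (hf _) _
  apply mem_of_natCast_mul_mem h0 (hp.coprime_iff_not_dvd.mpr hi).symm
  rw [natCast_mul_coeff, derivative_pow_prime_eq_iterate_lie hp h0]
  exact coeff_iterate_lie_mem hG hf derivative_mem _ _

theorem add_pow_prime_sub_pow_sub_pow_mem (hp : p.Prime) (h0 : (p : S) = 0)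
    (hG : ∀ a ∈ G, ∀ b ∈ G, ⁅a, b⁆ ∈ G) {x y : S} (hx : x ∈ G) (hy : y ∈ G) :
    (x + y) ^ p - x ^ p - y ^ p ∈ G := by
  set f : S[X] := C x * X + C y with hf
  have coeff_mem (i : ℕ) : f.coeff i ∈ G := by
    rcases i with _ | _ | i <;> simp [hf, coeff_C, coeff_X, hx, hy]
  have coeff_bot : (f ^ p).coeff 0 = y ^ p := by
    rw [← constantCoeff_apply, map_pow]
    simp [hf]
  have coeff_top : (f ^ p).coeff p = x ^ p := by
    simpa [hf] using coeff_pow_of_natDegree_le (m := p) (natDegree_linear_le (a := x) (b := y))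
  have expansion : (x + y) ^ p - x ^ p - y ^ p = ∑ i ∈ Finset.Ico 1 p, (f ^ p).coeff i := by
    rw [add_pow_eq_sum_coeff, Finset.sum_range_succ, coeff_top, Finset.range_eq_Ico,
      Finset.sum_eq_sum_Ico_succ_bot hp.pos, coeff_bot]
    abel
  rw [expansion]
  refine G.sum_mem fun i hi ↦ coeff_pow_prime_mem_of_not_dvd hp h0 hG coeff_mem ?_
  obtain ⟨hi_pos, hi_lt⟩ := Finset.mem_Ico.mp hi
  exact Nat.not_dvd_of_pos_of_lt hi_pos hi_lt

end Jacobson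

theorem statement8_general {L S T : Type*} [LieRing L] [Ring S] [Ring T] {p : ℕ} (hp : p.Prime)
    (hS : (p : S) = 0) (hT : (p : T) = 0)
    (ι : L →+ S) (hι : ∀ x y, ⁅ι x, ι y⁆ = ι ⁅x, y⁆) (ι_inj : Function.Injective ι)
    (ρ : L →+ T) (hρ : ∀ x y, ⁅ρ x, ρ y⁆ = ρ ⁅x, y⁆)
    {x y xp yp xyp : L} (hxp : ι xp = ι x ^ p) (hyp : ι yp = ι y ^ p)
    (hxyp : ι xyp = ι (x + y) ^ p) :
    ρ (x + y) ^ p - ρ xyp = (ρ x ^ p - ρ xp) + (ρ y ^ p - ρ yp) := by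
  have lie_mem : ∀ a ∈ (ι.prod ρ).range, ∀ b ∈ (ι.prod ρ).range, ⁅a, b⁆ ∈ (ι.prod ρ).range := by
    rintro _ ⟨u, rfl⟩ _ ⟨v, rfl⟩
    exact ⟨⁅u, v⁆, Prod.ext (hι u v).symm (hρ u v).symm⟩
  obtain ⟨z, hz⟩ := add_pow_prime_sub_pow_sub_pow_mem hp (Prod.ext hS hT) lie_mem ⟨x, rfl⟩ ⟨y, rfl⟩
  rw [← map_add] at hz
  have ι_z : ι z = ι (x + y) ^ p - ι x ^ p - ι y ^ p := congrArg Prod.fst hz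
  have ρ_z : ρ z = ρ (x + y) ^ p - ρ x ^ p - ρ y ^ p := congrArg Prod.snd hz
  have z_eq : z = xyp - xp - yp := ι_inj (by rw [ι_z, map_sub, map_sub, hxp, hyp, hxyp])
  rw [z_eq, map_sub, map_sub] at ρ_z
  rw [← add_sub_add_comm, sub_eq_sub_iff_sub_eq_sub, ← sub_sub, ← sub_sub, ρ_z]

/-- With `∇` an *integrable* connection on an `A`-module `M`
in characteristic `p` (`∇_D ∘ ∇_E - ∇_E ∘ ∇_D = ∇_⁅D,E⁆` for all derivations
`D, E`), the `p`-curvature `ψ(D) = (∇_D)^p - ∇_{D^[p]}` is additive in `D`: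
`ψ(D + E) = ψ(D) + ψ(E)`. -/
theorem statement8 {R A M : Type*} [CommRing R] [CommRing A] [Algebra R A]
    [AddCommGroup M] [Module R M] [Module A M] [IsScalarTower R A M]
    (p : ℕ) (hp : p.Prime) [CharP A p]
    (nabla : Derivation R A A → Module.End R M)
    (hadd : ∀ D E : Derivation R A A, nabla (D + E) = nabla D + nabla E)
    (hsmul : ∀ (a : A) (D : Derivation R A A) (m : M),
      nabla (a • D) m = a • nabla D m)
    (hleib : ∀ (D : Derivation R A A) (a : A) (m : M),
      nabla D (a • m) = (D a) • m + a • nabla D m)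
    (hint : ∀ D E : Derivation R A A,
      nabla D * nabla E - nabla E * nabla D = nabla ⁅D, E⁆)
    (D E Dp Ep DEp : Derivation R A A)
    (hDp : ∀ x : A, Dp x = (((D : A →ₗ[R] A)) ^ p) x)
    (hEp : ∀ x : A, Ep x = (((E : A →ₗ[R] A)) ^ p) x)
    (hDEp : ∀ x : A, DEp x = ((((D + E : Derivation R A A) : A →ₗ[R] A)) ^ p) x) :
    (nabla (D + E)) ^ p - nabla DEp =
      ((nabla D) ^ p - nabla Dp) + ((nabla E) ^ p - nabla Ep) :=
  statement8_general hp (natCast_end_eq_zero (CharP.cast_eq_zero A p))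
    (natCast_end_eq_zero (CharP.cast_eq_zero A p))
    (ι := .mk' (fun F : Derivation R A A ↦ (F : Module.End R A)) fun _ _ ↦ rfl)
    (hι := fun _ _ ↦ rfl) (ι_inj := fun _ _ h ↦ Derivation.ext (LinearMap.congr_fun h))
    (ρ := .mk' nabla hadd) (hρ := hint)
    (LinearMap.ext hDp) (LinearMap.ext hEp) (LinearMap.ext hDEp)
end
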